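/- arXiv:1309.7208 — 3 statements merged into one kernel-verified Lean document; each statement's English description precedes it below -/
import Mathlib

section
/- Let 0 < r⁻ < r⁺, ε > 0, let m be a positive integer, and let ω : [r⁻, r⁺] → ℝ be continuous and strictly increasing with ω(r⁻) = a⁻ and ω(r⁺) = a⁺. Suppose g : [r⁻, r⁺] → ℂ is twice continuously differentiable, not identically zero, satisfies the Dirichlet conditions g(r⁻) = g(r⁺) = 0, and satisfies −ε(g''(r) + (1/r)g'(r) − (m²/r²)g(r)) + i m ω(r) g(r) = λ g(r) for all r ∈ [r⁻, r⁺] and some λ ∈ ℂ. Then Re λ ≥ ε m² / (r⁺)² > 0 and m a⁻ < Im λ < m a⁺. -/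
/-!
Multiplied by `r`, the equation takes the Sturm–Liouville form `-(p g')' + w Q g = λ w g` with
`p = ε r`, `w = r` and `Q = ε m² / r² + i m ω`. For a direction `ζ` with `Re ζ ≥ 0`, the function
`Re (ζ p g' ḡ)` vanishes at both endpoints and has derivative
`p Re ζ |g'|² + w Re (ζ (Q - λ)) |g|²`. Hence `λ` lies in every open half-plane `c < Re (ζ z)` that
contains the values of `Q`; the directions `ζ = 1, -i, i` give the three sides of the semi-strip.
-/

open Set
open scoped ComplexConjugate

theorem lt_of_hasDerivAt_nonneg_of_exists_pos {f f' : ℝ → ℝ} {a b : ℝ}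
    (hf : ContinuousOn f (Icc a b)) (hf' : ∀ x ∈ Ioo a b, HasDerivAt f (f' x) x)
    (hnonneg : ∀ x ∈ Ioo a b, 0 ≤ f' x) (hpos : ∃ x ∈ Ioo a b, 0 < f' x) : f a < f b := by
  obtain ⟨x, hx, hfx⟩ := hpos
  have hab : a ≤ b := (hx.1.trans hx.2).le
  have hmono : MonotoneOn f (Icc a b) := by
    refine monotoneOn_of_hasDerivWithinAt_nonneg (f' := f') (convex_Icc a b) hf ?_ ?_ <;>
      rw [interior_Icc]
    exacts [fun y hy => (hf' y hy).hasDerivWithinAt, hnonneg]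
  by_contra! hba
  have hconst : ∀ y ∈ Icc a b, f y = f a := fun y hy =>
    le_antisymm ((hmono hy (right_mem_Icc.2 hab) hy.2).trans hba)
      (hmono (left_mem_Icc.2 hab) hy hy.1)
  have hzero : HasDerivAt f 0 x :=
    (hasDerivAt_const x (f a)).congr_of_eventuallyEq
      (Filter.eventually_of_mem (Icc_mem_nhds hx.1 hx.2) hconst)
  exact hfx.ne' ((hf' x hx).unique hzero)

theorem hasDerivAt_derivWithin_Icc {E : Type*} [NormedAddCommGroup E]
    [NormedSpace ℝ E] {f : ℝ → E} {a b x : ℝ} (hf : DifferentiableOn ℝ f (Icc a b))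
    (hx : x ∈ Ioo a b) : HasDerivAt f (derivWithin f (Icc a b) x) x :=
  (hf x (Ioo_subset_Icc_self hx)).hasDerivWithinAt.hasDerivAt (Icc_mem_nhds hx.1 hx.2)

theorem hasDerivAt_re_mul_flux_mul_conj {F g : ℝ → ℂ} {r p w : ℝ} {v z : ℂ} (ζ : ℂ)
    (hg : HasDerivAt g v r) (hF : HasDerivAt F (w * z * g r) r) (hFr : F r = p * v) :
    HasDerivAt (fun x => (ζ * (F x * conj (g x))).re)
      (p * ζ.re * Complex.normSq v + w * (ζ * z).re * Complex.normSq (g r)) r := by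
  have hprod : HasDerivAt (fun x => ζ * (F x * conj (g x)))
      (ζ * (w * z * g r * conj (g r) + F r * conj v)) r :=
    (hF.mul hg.star).const_mul ζ
  refine (Complex.reCLM.hasFDerivAt.comp_hasDerivAt r hprod).congr_deriv ?_
  have hsplit : ζ * (w * z * g r * conj (g r) + F r * conj v) =
      (p * Complex.normSq v : ℝ) * ζ + (w * Complex.normSq (g r) : ℝ) * (ζ * z) := by
    push_cast
    rw [hFr, ← Complex.mul_conj, ← Complex.mul_conj]
    ring
  rw [hsplit, Complex.reCLM_apply, Complex.add_re, Complex.re_ofReal_mul, Complex.re_ofReal_mul]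
  ring

/-- A nonzero solution `g` on `[a, b]`, vanishing at both endpoints, of the Sturm–Liouville equation
`-(p g')' + w Q g = lam w g` with a complex potential `Q`. The derivative of `g` is the one-sided
one at the endpoints, where the flux `p g'` is only required to be continuous; the equation is
imposed in the open interval and states the derivative of the flux. -/
structure IsDirichletEigenfunction (p w : ℝ → ℝ) (Q : ℝ → ℂ) (a b : ℝ) (lam : ℂ)
    (g : ℝ → ℂ) : Prop where
  differentiableOn : DifferentiableOn ℝ g (Icc a b)
  continuousOn_flux : ContinuousOn (fun r => p r * derivWithin g (Icc a b) r) (Icc a b)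
  hasDerivAt_flux : ∀ r ∈ Ioo a b,
    HasDerivAt (fun x => p x * derivWithin g (Icc a b) x) (w r * (Q r - lam) * g r) r
  left_eq_zero : g a = 0
  right_eq_zero : g b = 0
  exists_ne_zero : ∃ r ∈ Icc a b, g r ≠ 0

namespace IsDirichletEigenfunction

variable {p w : ℝ → ℝ} {Q : ℝ → ℂ} {a b c : ℝ} {lam : ℂ} {g : ℝ → ℂ}

theorem exists_mem_Ioo_ne_zero (hg : IsDirichletEigenfunction p w Q a b lam g) :
    ∃ r ∈ Ioo a b, g r ≠ 0 := by
  obtain ⟨r, hr, hgr⟩ := hg.exists_ne_zero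
  have hra : r ≠ a := fun h => hgr (h ▸ hg.left_eq_zero)
  have hrb : r ≠ b := fun h => hgr (h ▸ hg.right_eq_zero)
  exact ⟨r, ⟨hr.1.lt_of_ne' hra, hr.2.lt_of_ne hrb⟩, hgr⟩

theorem lt_re_mul (hg : IsDirichletEigenfunction p w Q a b lam g)
    (hp : ∀ r ∈ Ioo a b, 0 ≤ p r) (hw : ∀ r ∈ Ioo a b, 0 < w r) {ζ : ℂ} (hζ : 0 ≤ ζ.re)
    (hQ : ∀ r ∈ Ioo a b, c < (ζ * Q r).re) : c < (ζ * lam).re := by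
  by_contra! hlam
  have hgap : ∀ r ∈ Ioo a b, 0 < (ζ * (Q r - lam)).re := fun r hr => by
    rw [mul_sub, Complex.sub_re]
    exact sub_pos.2 (hlam.trans_lt (hQ r hr))
  have hkinetic : ∀ r ∈ Ioo a b,
      0 ≤ p r * ζ.re * Complex.normSq (derivWithin g (Icc a b) r) := fun r hr =>
    mul_nonneg (mul_nonneg (hp r hr) hζ) (Complex.normSq_nonneg _)
  have hcont : ContinuousOn
      (fun r => (ζ * (p r * derivWithin g (Icc a b) r * conj (g r))).re) (Icc a b) :=
    Complex.continuous_re.comp_continuousOn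
      (continuousOn_const.mul (hg.continuousOn_flux.mul hg.differentiableOn.continuousOn.star))
  have hlt := lt_of_hasDerivAt_nonneg_of_exists_pos hcont
    (fun r hr => hasDerivAt_re_mul_flux_mul_conj ζ
      (hasDerivAt_derivWithin_Icc hg.differentiableOn hr)
      (hg.hasDerivAt_flux r hr) rfl)
    (fun r hr => add_nonneg (hkinetic r hr)
      (mul_nonneg (mul_pos (hw r hr) (hgap r hr)).le (Complex.normSq_nonneg _)))
    (hg.exists_mem_Ioo_ne_zero.imp fun r ⟨hr, hgr⟩ => ⟨hr, add_pos_of_nonneg_of_pos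
      (hkinetic r hr) (mul_pos (mul_pos (hw r hr) (hgap r hr)) (Complex.normSq_pos.2 hgr))⟩)
  simp [hg.left_eq_zero, hg.right_eq_zero] at hlt

theorem lt_re (hg : IsDirichletEigenfunction p w Q a b lam g)
    (hp : ∀ r ∈ Ioo a b, 0 ≤ p r) (hw : ∀ r ∈ Ioo a b, 0 < w r)
    (hQ : ∀ r ∈ Ioo a b, c < (Q r).re) : c < lam.re := by
  simpa using hg.lt_re_mul hp hw (ζ := 1) (by simp) (by simpa using hQ)

theorem lt_im (hg : IsDirichletEigenfunction p w Q a b lam g)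
    (hp : ∀ r ∈ Ioo a b, 0 ≤ p r) (hw : ∀ r ∈ Ioo a b, 0 < w r)
    (hQ : ∀ r ∈ Ioo a b, c < (Q r).im) : c < lam.im := by
  simpa using hg.lt_re_mul hp hw (ζ := -Complex.I) (by simp) (by simpa using hQ)

theorem im_lt (hg : IsDirichletEigenfunction p w Q a b lam g)
    (hp : ∀ r ∈ Ioo a b, 0 ≤ p r) (hw : ∀ r ∈ Ioo a b, 0 < w r)
    (hQ : ∀ r ∈ Ioo a b, (Q r).im < c) : lam.im < c := by
  simpa using hg.lt_re_mul hp hw (ζ := Complex.I) (c := -c) (by simp) (by simpa using hQ)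

end IsDirichletEigenfunction

theorem isDirichletEigenfunction_of_radial_equation {rm rp ε m : ℝ} (hrm : 0 ≤ rm)
    {ω : ℝ → ℝ} {g : ℝ → ℂ} {lam : ℂ}
    (hg : DifferentiableOn ℝ g (Icc rm rp))
    (hg' : DifferentiableOn ℝ (derivWithin g (Icc rm rp)) (Icc rm rp))
    (hgne : ∃ r ∈ Icc rm rp, g r ≠ 0) (hgm : g rm = 0) (hgp : g rp = 0)
    (heq : ∀ r ∈ Ioo rm rp,
      -(ε : ℂ) * (derivWithin (derivWithin g (Icc rm rp)) (Icc rm rp) r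
          + (1 / (r : ℂ)) * derivWithin g (Icc rm rp) r - ((m : ℂ) ^ 2 / (r : ℂ) ^ 2) * g r)
        + Complex.I * (m : ℂ) * (ω r : ℂ) * g r = lam * g r) :
    IsDirichletEigenfunction (fun r => ε * r) id
      (fun r => (ε * m ^ 2 / r ^ 2 : ℝ) + (m * ω r : ℝ) * Complex.I) rm rp lam g where
  differentiableOn := hg
  continuousOn_flux := by
    have := hg'.continuousOn
    fun_prop
  hasDerivAt_flux r hr := by
    have hr0 : (r : ℂ) ≠ 0 := Complex.ofReal_ne_zero.2 (hrm.trans_lt hr.1).ne'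
    have hcoeff : HasDerivAt (fun x : ℝ => ((ε * x : ℝ) : ℂ)) ((ε * 1 : ℝ) : ℂ) r :=
      ((hasDerivAt_id r).const_mul ε).ofReal_comp
    refine (hcoeff.mul (hasDerivAt_derivWithin_Icc hg' hr)).congr_deriv ?_
    have hcancel : (r : ℂ) * (1 / r) = 1 := mul_one_div_cancel hr0
    simp only [id_eq]
    push_cast
    linear_combination -(r : ℂ) * heq r hr - ε * derivWithin g (Icc rm rp) r * hcancel
  left_eq_zero := hgm
  right_eq_zero := hgp
  exists_ne_zero := hgne

theorem annulus_eigenvalue_strip_general {rm rp ε m am ap : ℝ} (hrm : 0 ≤ rm) (hε : 0 < ε)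
    (hm : 0 < m) {ω : ℝ → ℝ} (hω : MapsTo ω (Ioo rm rp) (Ioo am ap)) {g : ℝ → ℂ} {lam : ℂ}
    (hg : DifferentiableOn ℝ g (Icc rm rp))
    (hg' : DifferentiableOn ℝ (derivWithin g (Icc rm rp)) (Icc rm rp))
    (hgne : ∃ r ∈ Icc rm rp, g r ≠ 0) (hgm : g rm = 0) (hgp : g rp = 0)
    (heq : ∀ r ∈ Ioo rm rp,
      -(ε : ℂ) * (derivWithin (derivWithin g (Icc rm rp)) (Icc rm rp) r
          + (1 / (r : ℂ)) * derivWithin g (Icc rm rp) r - ((m : ℂ) ^ 2 / (r : ℂ) ^ 2) * g r)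
        + Complex.I * (m : ℂ) * (ω r : ℂ) * g r = lam * g r) :
    ε * m ^ 2 / rp ^ 2 < lam.re ∧ m * am < lam.im ∧ lam.im < m * ap := by
  have hgL := isDirichletEigenfunction_of_radial_equation hrm hg hg' hgne hgm hgp heq
  have hw : ∀ r ∈ Ioo rm rp, 0 < r := fun r hr => hrm.trans_lt hr.1
  have hp : ∀ r ∈ Ioo rm rp, 0 ≤ ε * r := fun r hr => (mul_pos hε (hw r hr)).le
  refine ⟨hgL.lt_re hp hw fun r hr => ?_, hgL.lt_im hp hw fun r hr => ?_,
    hgL.im_lt hp hw fun r hr => ?_⟩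
  · have hr0 : 0 < r := hw r hr
    have hlt : ε * m ^ 2 / rp ^ 2 < ε * m ^ 2 / r ^ 2 := by
      gcongr
      exact hr.2
    simpa only [Complex.add_re, Complex.ofReal_re, Complex.re_ofReal_mul, Complex.I_re, mul_zero,
      add_zero] using hlt
  · simpa only [Complex.add_im, Complex.ofReal_im, Complex.im_ofReal_mul, Complex.I_im, mul_one,
      zero_add] using mul_lt_mul_of_pos_left (hω hr).1 hm
  · simpa only [Complex.add_im, Complex.ofReal_im, Complex.im_ofReal_mul, Complex.I_im, mul_one,
      zero_add] using mul_lt_mul_of_pos_left (hω hr).2 hm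

/-- Dirichlet eigenvalues of the radial advection-diffusion operator
`L_{m,ε} g = −ε(g'' + (1/r)g' − (m²/r²)g) + i m ω(r) g` on the annulus interval `[r⁻, r⁺]`,
for a continuous strictly increasing potential `ω` with `ω(r⁻) = a⁻`, `ω(r⁺) = a⁺`, satisfy
`Re λ ≥ ε m²/(r⁺)² > 0` and `m a⁻ < Im λ < m a⁺`. -/
theorem annulus_eigenvalue_strip
    (rm rp : ℝ) (hrm : 0 < rm) (hrmrp : rm < rp)
    (ε : ℝ) (hε : 0 < ε) (m : ℕ) (hm : 0 < m)
    (ω : ℝ → ℝ) (hωc : ContinuousOn ω (Set.Icc rm rp))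
    (hωmono : StrictMonoOn ω (Set.Icc rm rp))
    (am ap : ℝ) (ham : ω rm = am) (hap : ω rp = ap)
    (g : ℝ → ℂ) (hg : ContDiffOn ℝ 2 g (Set.Icc rm rp))
    (hgne : ∃ r ∈ Set.Icc rm rp, g r ≠ 0)
    (hgm : g rm = 0) (hgp : g rp = 0)
    (lam : ℂ)
    (heq : ∀ r ∈ Set.Icc rm rp,
      -(ε : ℂ) * (derivWithin (derivWithin g (Set.Icc rm rp)) (Set.Icc rm rp) r
          + (1 / (r : ℂ)) * derivWithin g (Set.Icc rm rp) r
          - ((m : ℂ) ^ 2 / (r : ℂ) ^ 2) * g r)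
        + Complex.I * (m : ℂ) * (ω r : ℂ) * g r = lam * g r) :
    (ε * (m : ℝ) ^ 2 / rp ^ 2 ≤ lam.re ∧ 0 < ε * (m : ℝ) ^ 2 / rp ^ 2) ∧
    ((m : ℝ) * am < lam.im ∧ lam.im < (m : ℝ) * ap) := by
  have hg' : DifferentiableOn ℝ (derivWithin g (Icc rm rp)) (Icc rm rp) :=
    (hg.derivWithin (m := 1) (uniqueDiffOn_Icc hrmrp) (by norm_num)).differentiableOn one_ne_zero
  obtain ⟨hre, him⟩ := annulus_eigenvalue_strip_general hrm.le hε (Nat.cast_pos.2 hm)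
    (ham ▸ hap ▸ hωmono.mapsTo_Ioo) (hg.differentiableOn two_ne_zero) hg' hgne hgm hgp
    (fun r hr => by exact_mod_cast heq r (Ioo_subset_Icc_self hr))
  have hrp : 0 < rp := hrm.trans hrmrp
  exact ⟨⟨hre.le, by positivity⟩, him⟩
end

section
/- Let ε > 0, let ω : (0,∞) → ℝ be twice continuously differentiable, let f₀ : ℝ → ℝ be continuous with F(t) = ∫₀ᵗ f₀(t')dt', let f₁ ∈ ℝ, and set f = f₀ + f₁. Let c : ℝ × (0,∞) × ℝ → ℂ be such that c(t,r,θ) is continuously differentiable in t and twice continuously differentiable in (r,θ), and suppose c satisfies c_t + f(t) ω(r) c_θ = ε (c_{rr} + (1/r) c_r + (1/r²) c_{θθ}) everywhere. Define v(t,r,φ) = c(t, r, φ + ω(r) F(t)). Then v satisfies v_t + f₁ ω(r) v_φ = ε ( v_{rr} + (1/r) v_r + (1/r²) v_{φφ} − F(t) ( (ω'(r)/r + ω''(r)) v_φ + 2 ω'(r) v_{rφ} ) + F(t)² ω'(r)² v_{φφ} ) everywhere. -/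
/-!
At a fixed time the substitution is the shear `S g (r, φ) = g (r, φ + a r)` with `a = F(t) ω`.
It commutes with `∂_φ`, while `∂_r S = S ∂_r + a' S ∂_θ`; applying this rule twice expresses the
polar Laplacian of `c` through derivatives of `v = S c`. In time, differentiating `F` produces the
extra term `f₀ ω c_θ`, which absorbs the oscillating part of the advection.
-/

open Function Set Filter Topology

section PartialDerivatives

variable {𝕜 E : Type*} [NontriviallyNormedField 𝕜] [NormedAddCommGroup E] [NormedSpace 𝕜 E]
  {g : 𝕜 → 𝕜 → E} {b : 𝕜 → 𝕜} {b' x y : 𝕜}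

/-- The partial derivative `∂g/∂x` of a curried function `g (x, y)`, with the junk value `0` where
`deriv` has it. -/
noncomputable def partialFst (g : 𝕜 → 𝕜 → E) (x y : 𝕜) : E :=
  deriv (fun x' => g x' y) x

/-- The partial derivative `∂g/∂y` of a curried function `g (x, y)`, with the junk value `0` where
`deriv` has it. -/
noncomputable def partialSnd (g : 𝕜 → 𝕜 → E) (x y : 𝕜) : E :=
  deriv (fun y' => g x y') y

theorem partialFst_eq_fderiv (hg : DifferentiableAt 𝕜 (uncurry g) (x, y)) :
    partialFst g x y = fderiv 𝕜 (uncurry g) (x, y) (1, 0) := by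
  have horizontal : HasDerivAt (fun x' => (x', y)) (1, 0) x :=
    (hasDerivAt_id x).prodMk (hasDerivAt_const x y)
  exact (hg.hasFDerivAt.comp_hasDerivAt x horizontal).deriv

theorem partialSnd_eq_fderiv (hg : DifferentiableAt 𝕜 (uncurry g) (x, y)) :
    partialSnd g x y = fderiv 𝕜 (uncurry g) (x, y) (0, 1) := by
  have vertical : HasDerivAt (fun y' => (x, y')) (0, 1) y :=
    (hasDerivAt_const y x).prodMk (hasDerivAt_id y)
  exact (hg.hasFDerivAt.comp_hasDerivAt y vertical).deriv

theorem iteratedDeriv_two_fst (g : 𝕜 → 𝕜 → E) (x y : 𝕜) :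
    iteratedDeriv 2 (fun x' => g x' y) x = partialFst (partialFst g) x y := by
  rw [iteratedDeriv_succ, iteratedDeriv_one]
  rfl

theorem iteratedDeriv_two_snd (g : 𝕜 → 𝕜 → E) (x y : 𝕜) :
    iteratedDeriv 2 (fun y' => g x y') y = partialSnd (partialSnd g) x y := by
  rw [iteratedDeriv_succ, iteratedDeriv_one]
  rfl

theorem hasDerivAt_along_graph (hg : DifferentiableAt 𝕜 (uncurry g) (x, b x))
    (hb : HasDerivAt b b' x) :
    HasDerivAt (fun s => g s (b s)) (partialFst g x (b x) + b' • partialSnd g x (b x)) x := by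
  have tangent_eq : ((1, b') : 𝕜 × 𝕜) = (1, 0) + b' • (0, 1) := by simp
  rw [partialFst_eq_fderiv hg, partialSnd_eq_fderiv hg, ← map_smul, ← map_add, ← tangent_eq]
  exact hg.hasFDerivAt.comp_hasDerivAt x ((hasDerivAt_id x).prodMk hb)

theorem eventually_differentiableAt_of_contDiffAt_two {F : Type*} [NormedAddCommGroup F]
    [NormedSpace 𝕜 F] {h : F → E} {p : F} (hh : ContDiffAt 𝕜 2 h p) :
    ∀ᶠ q in 𝓝 p, DifferentiableAt 𝕜 h q :=
  (hh.eventually (by simp)).mono fun _ hq => hq.differentiableAt two_ne_zero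

theorem hasFDerivAt_fderiv_apply {F : Type*} [NormedAddCommGroup F] [NormedSpace 𝕜 F]
    {h : F → E} {p : F} (hh : ContDiffAt 𝕜 2 h p) (u : F) :
    HasFDerivAt (fun q => fderiv 𝕜 h q u) ((fderiv 𝕜 (fderiv 𝕜 h) p).flip u) p := by
  have fderiv_differentiable : DifferentiableAt 𝕜 (fderiv 𝕜 h) p :=
    (hh.fderiv_right (m := 1) one_add_one_eq_two.le).differentiableAt one_ne_zero
  simpa using fderiv_differentiable.hasFDerivAt.clm_apply (hasFDerivAt_const u p)

theorem hasFDerivAt_partialFst (hg : ContDiffAt 𝕜 2 (uncurry g) (x, y)) :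
    HasFDerivAt (uncurry (partialFst g))
      ((fderiv 𝕜 (fderiv 𝕜 (uncurry g)) (x, y)).flip (1, 0)) (x, y) :=
  (hasFDerivAt_fderiv_apply hg (1, 0)).congr_of_eventuallyEq <|
    (eventually_differentiableAt_of_contDiffAt_two hg).mono fun _ => partialFst_eq_fderiv

theorem hasFDerivAt_partialSnd (hg : ContDiffAt 𝕜 2 (uncurry g) (x, y)) :
    HasFDerivAt (uncurry (partialSnd g))
      ((fderiv 𝕜 (fderiv 𝕜 (uncurry g)) (x, y)).flip (0, 1)) (x, y) :=
  (hasFDerivAt_fderiv_apply hg (0, 1)).congr_of_eventuallyEq <|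
    (eventually_differentiableAt_of_contDiffAt_two hg).mono fun _ => partialSnd_eq_fderiv

theorem partialSnd_partialFst_comm [IsRCLikeNormedField 𝕜]
    (hg : ContDiffAt 𝕜 2 (uncurry g) (x, y)) :
    partialSnd (partialFst g) x y = partialFst (partialSnd g) x y := by
  have hfst := hasFDerivAt_partialFst hg
  have hsnd := hasFDerivAt_partialSnd hg
  rw [partialSnd_eq_fderiv hfst.differentiableAt, partialFst_eq_fderiv hsnd.differentiableAt,
    hfst.fderiv, hsnd.fderiv]
  exact (hg.isSymmSndFDerivAt (by simp)).eq (0, 1) (1, 0)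

end PartialDerivatives

section Shear

variable {𝕜 E : Type*} [NontriviallyNormedField 𝕜] [NormedAddCommGroup E] [NormedSpace 𝕜 E]
  {g : 𝕜 → 𝕜 → E} {a : 𝕜 → 𝕜} {a' x y : 𝕜}

/-- The pullback of `g` along the shear `(x, y) ↦ (x, y + a x)`; with `a = F(t) ω` it passes from
the angle `θ` to the co-moving angle `φ = θ - ω(r) F(t)`. -/
def shear (a : 𝕜 → 𝕜) (g : 𝕜 → 𝕜 → E) (x y : 𝕜) : E :=
  g x (y + a x)

theorem partialSnd_shear (a : 𝕜 → 𝕜) (g : 𝕜 → 𝕜 → E) :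
    partialSnd (shear a g) = shear a (partialSnd g) := by
  funext x y
  exact deriv_comp_add_const (g x) (a x) y

theorem hasDerivAt_shear (hg : DifferentiableAt 𝕜 (uncurry g) (x, y + a x))
    (ha : HasDerivAt a a' x) :
    HasDerivAt (fun s => shear a g s y)
      (shear a (partialFst g) x y + a' • shear a (partialSnd g) x y) x :=
  hasDerivAt_along_graph hg (ha.const_add y)

theorem partialFst_shear (hg : DifferentiableAt 𝕜 (uncurry g) (x, y + a x))
    (ha : HasDerivAt a a' x) :
    partialFst (shear a g) x y = shear a (partialFst g) x y + a' • shear a (partialSnd g) x y :=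
  (hasDerivAt_shear hg ha).deriv

theorem eventually_partialFst_shear (hg : ContDiffAt 𝕜 2 (uncurry g) (x, y + a x))
    (ha : ContDiffAt 𝕜 2 a x) :
    ∀ᶠ s in 𝓝 x, partialFst (shear a g) s y =
      shear a (partialFst g) s y + deriv a s • shear a (partialSnd g) s y := by
  have graph_tendsto : Tendsto (fun s => (s, y + a s)) (𝓝 x) (𝓝 (x, y + a x)) :=
    tendsto_id.prodMk_nhds (ha.continuousAt.const_add y)
  filter_upwards [graph_tendsto.eventually (eventually_differentiableAt_of_contDiffAt_two hg),
    eventually_differentiableAt_of_contDiffAt_two ha] with s hgs has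
  exact partialFst_shear hgs has.hasDerivAt

theorem partialFst_partialFst_shear [IsRCLikeNormedField 𝕜]
    (hg : ContDiffAt 𝕜 2 (uncurry g) (x, y + a x)) (ha : ContDiffAt 𝕜 2 a x) :
    partialFst (partialFst (shear a g)) x y =
      shear a (partialFst (partialFst g)) x y
        + (2 * deriv a x) • shear a (partialFst (partialSnd g)) x y
        + deriv a x ^ 2 • shear a (partialSnd (partialSnd g)) x y
        + deriv (deriv a) x • shear a (partialSnd g) x y := by
  have ha₁ : HasDerivAt a (deriv a x) x := (ha.differentiableAt two_ne_zero).hasDerivAt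
  have ha₂ : HasDerivAt (deriv a) (deriv (deriv a) x) x :=
    ((ha.derivWithin (m := 1) one_add_one_eq_two.le).differentiableAt one_ne_zero).hasDerivAt
  have hfst := hasDerivAt_shear (hasFDerivAt_partialFst hg).differentiableAt ha₁
  have hsnd := hasDerivAt_shear (hasFDerivAt_partialSnd hg).differentiableAt ha₁
  have mixed : shear a (partialSnd (partialFst g)) x y = shear a (partialFst (partialSnd g)) x y :=
    partialSnd_partialFst_comm hg
  calc partialFst (partialFst (shear a g)) x y
      = deriv (fun s => shear a (partialFst g) s y + deriv a s • shear a (partialSnd g) s y) x :=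
        EventuallyEq.deriv_eq (eventually_partialFst_shear hg ha)
    _ = (shear a (partialFst (partialFst g)) x y
            + deriv a x • shear a (partialSnd (partialFst g)) x y)
          + (deriv a x • (shear a (partialFst (partialSnd g)) x y
              + deriv a x • shear a (partialSnd (partialSnd g)) x y)
            + deriv (deriv a) x • shear a (partialSnd g) x y) :=
        (hfst.add (ha₂.smul hsnd)).deriv
    _ = _ := by rw [mixed]; module

end Shear

section PolarLaplacian

variable {E : Type*} [NormedAddCommGroup E] [NormedSpace ℝ E]

/-- The Laplacian `g_rr + g_r / r + g_θθ / r²` in polar coordinates, the diffusion operator of the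
equation; meaningful only for `r ≠ 0`. -/
noncomputable def polarLaplacian (g : ℝ → ℝ → E) (r θ : ℝ) : E :=
  partialFst (partialFst g) r θ + (1 / r) • partialFst g r θ
    + (1 / r ^ 2) • partialSnd (partialSnd g) r θ

theorem polarLaplacian_eq_iteratedDeriv (g : ℝ → ℝ → ℂ) (r θ : ℝ) :
    polarLaplacian g r θ =
      iteratedDeriv 2 (fun r' => g r' θ) r + (1 / (r : ℂ)) * deriv (fun r' => g r' θ) r
        + (1 / (r : ℂ) ^ 2) * iteratedDeriv 2 (fun θ' => g r θ') θ := by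
  simp only [polarLaplacian, iteratedDeriv_two_fst, iteratedDeriv_two_snd, Complex.real_smul]
  push_cast
  rfl

theorem shear_polarLaplacian {g : ℝ → ℝ → E} {a : ℝ → ℝ} {r φ : ℝ}
    (hg : ContDiffAt ℝ 2 (uncurry g) (r, φ + a r)) (ha : ContDiffAt ℝ 2 a r) :
    shear a (polarLaplacian g) r φ =
      polarLaplacian (shear a g) r φ
        - ((deriv a r / r + deriv (deriv a) r) • partialSnd (shear a g) r φ
          + (2 * deriv a r) • partialFst (partialSnd (shear a g)) r φ)
        + deriv a r ^ 2 • partialSnd (partialSnd (shear a g)) r φ := by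
  have ha₁ : HasDerivAt a (deriv a r) r := (ha.differentiableAt two_ne_zero).hasDerivAt
  simp only [polarLaplacian, partialSnd_shear, partialFst_partialFst_shear hg ha,
    partialFst_shear (hg.differentiableAt two_ne_zero) ha₁,
    partialFst_shear (hasFDerivAt_partialSnd hg).differentiableAt ha₁]
  simp only [shear, polarLaplacian]
  module

theorem streamline_transformation_general
    (ε : ℝ) (ω : ℝ → ℝ) (hω : ContDiffOn ℝ 2 ω (Ioi 0))
    (f₀ F : ℝ → ℝ) (hF : ∀ t, HasDerivAt F (f₀ t) t) (f₁ : ℝ)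
    (c : ℝ → ℝ → ℝ → E)
    (hc_time : ∀ r ∈ Ioi (0 : ℝ), Differentiable ℝ (uncurry fun t θ => c t r θ))
    (hc_space : ∀ t, ContDiffOn ℝ 2 (uncurry (c t)) (Ioi 0 ×ˢ univ))
    (heq : ∀ t, ∀ r ∈ Ioi (0 : ℝ), ∀ θ,
      deriv (fun t' => c t' r θ) t + ((f₀ t + f₁) * ω r) • partialSnd (c t) r θ
        = ε • polarLaplacian (c t) r θ)
    (v : ℝ → ℝ → ℝ → E) (hv : ∀ t, v t = shear (fun r => ω r * F t) (c t)) :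
    ∀ t, ∀ r ∈ Ioi (0 : ℝ), ∀ φ,
      deriv (fun t' => v t' r φ) t + (f₁ * ω r) • partialSnd (v t) r φ
        = ε • (polarLaplacian (v t) r φ
            - F t • ((deriv ω r / r + deriv (deriv ω) r) • partialSnd (v t) r φ
              + (2 * deriv ω r) • partialFst (partialSnd (v t)) r φ)
            + (F t ^ 2 * deriv ω r ^ 2) • partialSnd (partialSnd (v t)) r φ) := by
  intro t r hr φ
  obtain rfl : v = fun t => shear (fun r => ω r * F t) (c t) := funext hv
  have hωr : ContDiffAt ℝ 2 ω r := hω.contDiffAt (Ioi_mem_nhds hr)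
  have hcr : ContDiffAt ℝ 2 (uncurry (c t)) (r, φ + ω r * F t) :=
    (hc_space t).contDiffAt (prod_mem_nhds (Ioi_mem_nhds hr) univ_mem)
  have time_deriv : deriv (fun t' => shear (fun r => ω r * F t') (c t') r φ) t =
      deriv (fun t' => c t' r (φ + ω r * F t)) t
        + (ω r * f₀ t) • partialSnd (c t) r (φ + ω r * F t) :=
    (hasDerivAt_along_graph (hc_time r hr _) (((hF t).const_mul (ω r)).const_add φ)).deriv
  have laplacian := shear_polarLaplacian hcr (hωr.mul contDiffAt_const)
  simp only [deriv_mul_const_field', deriv_mul_const_field] at laplacian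
  calc _ = deriv (fun t' => c t' r (φ + ω r * F t)) t
          + ((f₀ t + f₁) * ω r) • partialSnd (c t) r (φ + ω r * F t) := by
        rw [time_deriv, partialSnd_shear, shear]; module
    _ = ε • shear (fun r => ω r * F t) (polarLaplacian (c t)) r φ := heq t r hr _
    _ = _ := by rw [laplacian]; module

end PolarLaplacian

/-- Transformation of the time-dependent polar advection-diffusion equation
`c_t + f(t)ω(r)c_θ = ε(c_{rr} + (1/r)c_r + (1/r²)c_{θθ})` to the co-moving stream-line
coordinate `φ = θ − ω(r)F(t)`: the function `v(t,r,φ) = c(t,r,φ+ω(r)F(t))` satisfies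
`v_t + f₁ ω v_φ = ε(v_{rr} + (1/r)v_r + (1/r²)v_{φφ}
  − F(t)((ω'/r + ω'')v_φ + 2ω' v_{rφ}) + F(t)²(ω')² v_{φφ})`. -/
theorem streamline_transformation
    (ε : ℝ) (hε : 0 < ε)
    (ω : ℝ → ℝ) (hω : ContDiffOn ℝ 2 ω (Set.Ioi 0))
    (f₀ : ℝ → ℝ) (hf₀ : Continuous f₀)
    (F : ℝ → ℝ) (hF : ∀ t, F t = ∫ t' in (0:ℝ)..t, f₀ t')
    (f₁ : ℝ) (f : ℝ → ℝ) (hf : ∀ t, f t = f₀ t + f₁)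
    (c : ℝ → ℝ → ℝ → ℂ)
    (hc1 : ContDiff ℝ 1 (fun p : ℝ × ℝ × ℝ => c p.1 p.2.1 p.2.2))
    (hc2 : ∀ t, ContDiff ℝ 2 (fun q : ℝ × ℝ => c t q.1 q.2))
    (heq : ∀ t : ℝ, ∀ r ∈ Set.Ioi (0:ℝ), ∀ θ : ℝ,
      deriv (fun t' => c t' r θ) t
          + (f t : ℂ) * (ω r : ℂ) * deriv (fun θ' => c t r θ') θ
        = (ε : ℂ) * (iteratedDeriv 2 (fun r' => c t r' θ) r
            + (1 / (r : ℂ)) * deriv (fun r' => c t r' θ) r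
            + (1 / (r : ℂ) ^ 2) * iteratedDeriv 2 (fun θ' => c t r θ') θ))
    (v : ℝ → ℝ → ℝ → ℂ)
    (hv : ∀ t r φ, v t r φ = c t r (φ + ω r * F t)) :
    ∀ t : ℝ, ∀ r ∈ Set.Ioi (0:ℝ), ∀ φ : ℝ,
      deriv (fun t' => v t' r φ) t
          + (f₁ : ℂ) * (ω r : ℂ) * deriv (fun φ' => v t r φ') φ
        = (ε : ℂ) * (iteratedDeriv 2 (fun r' => v t r' φ) r
            + (1 / (r : ℂ)) * deriv (fun r' => v t r' φ) r
            + (1 / (r : ℂ) ^ 2) * iteratedDeriv 2 (fun φ' => v t r φ') φ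
            - (F t : ℂ) * (((deriv ω r / r + deriv (deriv ω) r : ℝ) : ℂ)
                  * deriv (fun φ' => v t r φ') φ
                + 2 * ((deriv ω r : ℝ) : ℂ)
                  * deriv (fun r' => deriv (fun φ' => v t r' φ') φ) r)
            + ((F t : ℝ) : ℂ) ^ 2 * ((deriv ω r : ℝ) : ℂ) ^ 2
                * iteratedDeriv 2 (fun φ' => v t r φ') φ) := by
  have hF_deriv (t : ℝ) : HasDerivAt F (f₀ t) t :=
    funext hF ▸ (hf₀.integral_hasStrictDerivAt 0 t).hasDerivAt
  have hc_time (r : ℝ) : Differentiable ℝ (uncurry fun t θ => c t r θ) :=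
    (hc1.differentiable one_ne_zero).comp (f := fun q : ℝ × ℝ => (q.1, r, q.2)) (by fun_prop)
  have heq_smul (t r : ℝ) (hr : r ∈ Ioi 0) (θ : ℝ) :
      deriv (fun t' => c t' r θ) t + ((f₀ t + f₁) * ω r) • partialSnd (c t) r θ
        = ε • polarLaplacian (c t) r θ := by
    rw [polarLaplacian_eq_iteratedDeriv, Complex.real_smul, Complex.real_smul, ← hf,
      Complex.ofReal_mul]
    exact heq t r hr θ
  have hv_smul := streamline_transformation_general ε ω hω f₀ F hF_deriv f₁ c (fun r _ => hc_time r)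
    (fun t => (hc2 t).contDiffOn) heq_smul v (fun t => funext₂ (hv t))
  simp only [polarLaplacian_eq_iteratedDeriv, ← iteratedDeriv_two_snd, Complex.real_smul] at hv_smul
  exact_mod_cast hv_smul
end

section
/- Let w ∈ ℂ with Im w < 0. Then, using the principal branch of the complex square root, ∫₀¹ √( i w (u² − 1) ) du = (π/4) √( −i w ). -/
/-!
A nonnegative real factor leaves the argument of a complex number unchanged, so it can be pulled
out of a principal power. Since `i w (u² - 1) = (1 - u²) (-i w)` with `1 - u² ≥ 0` on `[0, 1]`, the
integrand is `√(1 - u²) √(-i w)`, and what remains is the area of a quarter of the unit disc.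
-/

open Complex intervalIntegral

theorem ofReal_mul_cpow_of_nonneg {r : ℝ} (hr : 0 ≤ r) (z s : ℂ) :
    ((r : ℂ) * z) ^ s = (r : ℂ) ^ s * z ^ s := by
  rcases eq_or_ne s 0 with rfl | hs
  · simp
  rcases hr.eq_or_lt with rfl | hr_pos
  · simp [hs]
  rcases eq_or_ne z 0 with rfl | hz
  · simp [hs]
  have hr_ne : (r : ℂ) ≠ 0 := ofReal_ne_zero.mpr hr_pos.ne'
  rw [cpow_def_of_ne_zero (mul_ne_zero hr_ne hz), cpow_def_of_ne_zero hr_ne,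
    cpow_def_of_ne_zero hz, log_ofReal_mul hr_pos hz, ofReal_log hr, add_mul, exp_add]

theorem ofReal_cpow_one_half_of_nonneg {r : ℝ} (hr : 0 ≤ r) :
    (r : ℂ) ^ ((1 : ℂ) / 2) = (√r : ℝ) := by
  rw [Real.sqrt_eq_rpow, ofReal_cpow hr]
  norm_num

theorem intervalIntegral_ofReal_mul_cpow {f : ℝ → ℝ} {a b : ℝ} (hf : ∀ u ∈ Set.uIcc a b, 0 ≤ f u)
    (z s : ℂ) :
    ∫ u in a..b, ((f u : ℂ) * z) ^ s = (∫ u in a..b, (f u : ℂ) ^ s) * z ^ s := by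
  rw [← integral_mul_const]
  exact integral_congr fun u hu ↦ ofReal_mul_cpow_of_nonneg (hf u hu) z s

theorem intervalIntegral_ofReal_mul_cpow_one_half {f : ℝ → ℝ} {a b : ℝ}
    (hf : ∀ u ∈ Set.uIcc a b, 0 ≤ f u) (z : ℂ) :
    ∫ u in a..b, ((f u : ℂ) * z) ^ ((1 : ℂ) / 2) =
      (∫ u in a..b, √(f u) : ℝ) * z ^ ((1 : ℂ) / 2) := by
  rw [intervalIntegral_ofReal_mul_cpow hf, ← integral_ofReal]
  congr 1
  exact integral_congr fun u hu ↦ ofReal_cpow_one_half_of_nonneg (hf u hu)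

theorem intervalIntegral_neg_self_of_even {E : Type*} [NormedAddCommGroup E] [NormedSpace ℝ E]
    {f : ℝ → E} (hf : f.Even) {a : ℝ} (hint : IntervalIntegrable f MeasureTheory.volume 0 a) :
    ∫ x in -a..a, f x = (2 : ℝ) • ∫ x in 0..a, f x := by
  have hint_neg : IntervalIntegrable f MeasureTheory.volume (-a) 0 := by
    simpa only [hf _, neg_zero] using ((IntervalIntegrable.iff_comp_neg).mp hint).symm
  have hreflect : ∫ x in -a..0, f x = ∫ x in 0..a, f x := by
    simpa only [hf _, neg_zero] using (integral_comp_neg (a := 0) (b := a) f).symm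
  rw [← integral_add_adjacent_intervals hint_neg hint, hreflect, two_smul]

theorem integral_zero_one_sqrt_one_sub_sq : ∫ x in (0 : ℝ)..1, √(1 - x ^ 2) = Real.pi / 4 := by
  have hcont : Continuous fun x : ℝ ↦ √(1 - x ^ 2) := by fun_prop
  have heven : Function.Even fun x : ℝ ↦ √(1 - x ^ 2) := fun x ↦ by simp only [neg_sq]
  have hdouble := intervalIntegral_neg_self_of_even heven (hcont.intervalIntegrable 0 1)
  rw [integral_sqrt_one_sub_sq, smul_eq_mul] at hdouble
  linarith

theorem WKBJ_phase_integral_quadratic_general (w : ℂ) :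
    (∫ u in (0 : ℝ)..1, (I * w * ((u : ℂ) ^ 2 - 1)) ^ ((1 : ℂ) / 2))
      = ((Real.pi : ℂ) / 4) * ((-I * w) ^ ((1 : ℂ) / 2)) := by
  have hnonneg : ∀ u ∈ Set.uIcc (0 : ℝ) 1, 0 ≤ 1 - u ^ 2 := by
    intro u hu
    rw [Set.uIcc_of_le zero_le_one] at hu
    exact sub_nonneg.mpr (pow_le_one₀ hu.1 hu.2)
  have hfactor (u : ℝ) : I * w * ((u : ℂ) ^ 2 - 1) = ((1 - u ^ 2 : ℝ) : ℂ) * (-I * w) := by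
    push_cast
    ring
  simp only [hfactor]
  rw [intervalIntegral_ofReal_mul_cpow_one_half hnonneg, integral_zero_one_sqrt_one_sub_sq]
  push_cast
  rfl

/-- For `Im w < 0`, with the principal branch of the complex square root,
`∫₀¹ √(i w (u² − 1)) du = (π/4) √(−i w)`. -/
theorem WKBJ_phase_integral_quadratic
    (w : ℂ) (hw : w.im < 0) :
    (∫ u in (0:ℝ)..1, (Complex.I * w * ((u : ℂ) ^ 2 - 1)) ^ ((1:ℂ)/2))
      = ((Real.pi : ℂ) / 4) * ((-Complex.I * w) ^ ((1:ℂ)/2)) :=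
  WKBJ_phase_integral_quadratic_general w
end
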